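/- Let ℓ ≥ 1 be an integer and define S(α) := { p ∈ (0, π) : sin(ℓp) ≠ 0 and sin((ℓ+1)p) = α·sin(ℓp) }. If 0 ≤ α < (ℓ+1)/ℓ, then S(α) has exactly ℓ elements; if α ≥ (ℓ+1)/ℓ, then S(α) has exactly ℓ−1 elements. -/

import Mathlib

/-!
The quasimomenta are the points of `(0, π)` where `f p = sin ((ℓ + 1) p) / sin (ℓ p)` equals `α`.
The zeros of `sin (ℓ p)` cut `(0, π)` into `ℓ` intervals, and `f` is strictly decreasing on each of
them because `|sin (ℓ p)| ≤ ℓ |sin p|`. At the interior cut points `f` has poles, while at `0` it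
tends to `(ℓ + 1) / ℓ`; the reflection `f (π - p) = -f p` exchanges the two ends. Hence every
interval contains exactly one quasimomentum, except that the first one contains none when
`(ℓ + 1) / ℓ ≤ α`, and the last one none when `α ≤ -(ℓ + 1) / ℓ`.
-/

open Set Filter Topology Real

lemma mem_image_Ioo_iff_of_strictAntiOn {X Y : Type*} [ConditionallyCompleteLinearOrder X]
    [TopologicalSpace X] [OrderTopology X] [DenselyOrdered X] [LinearOrder Y] [TopologicalSpace Y]
    [OrderClosedTopology Y] {f : X → Y} {a b : X} (hanti : StrictAntiOn f (Ioo a b))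
    (hcont : ContinuousOn f (Ioo a b)) {y : Y} :
    y ∈ f '' Ioo a b ↔ (∃ x ∈ Ioo a b, y < f x) ∧ ∃ x ∈ Ioo a b, f x < y := by
  constructor
  · rintro ⟨x, hx, rfl⟩
    obtain ⟨u, hau, hux⟩ := exists_between hx.1
    obtain ⟨v, hxv, hvb⟩ := exists_between hx.2
    have hu : u ∈ Ioo a b := ⟨hau, hux.trans hx.2⟩
    have hv : v ∈ Ioo a b := ⟨hx.1.trans hxv, hvb⟩
    exact ⟨⟨u, hu, hanti hu hx hux⟩, v, hv, hanti hx hv hxv⟩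
  · rintro ⟨⟨u, hu, hyu⟩, v, hv, hvy⟩
    exact isPreconnected_Ioo.intermediate_value hv hu hcont ⟨hvy.le, hyu.le⟩

lemma lt_of_tendsto_nhdsGT_of_strictAntiOn {X Y : Type*} [LinearOrder X] [TopologicalSpace X]
    [OrderTopology X] [DenselyOrdered X] [Preorder Y] [TopologicalSpace Y] [OrderClosedTopology Y]
    {f : X → Y} {a b : X} (hanti : StrictAntiOn f (Ioo a b)) {L : Y}
    (hL : Tendsto f (𝓝[>] a) (𝓝 L)) {x : X} (hx : x ∈ Ioo a b) : f x < L := by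
  obtain ⟨u, hau, hux⟩ := exists_between hx.1
  have hu : u ∈ Ioo a b := ⟨hau, hux.trans hx.2⟩
  have : (𝓝[>] a).NeBot := nhdsGT_neBot_of_exists_gt ⟨u, hau⟩
  have hfu : f u ≤ L := ge_of_tendsto hL <| by
    filter_upwards [Ioo_mem_nhdsGT hau] with v hv
    exact (hanti ⟨hv.1, hv.2.trans hu.2⟩ hu hv.2).le
  exact (hanti hu hx hux).trans_le hfu

lemma abs_sin_nat_mul_le (n : ℕ) (x : ℝ) : |sin (n * x)| ≤ n * |sin x| := by
  induction n with
  | zero => simp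
  | succ n ih =>
    have hsum : ((n + 1 : ℕ) : ℝ) * x = n * x + x := by push_cast; ring
    calc |sin ((n + 1 : ℕ) * x)|
        = |sin (n * x) * cos x + cos (n * x) * sin x| := by rw [hsum, sin_add]
      _ ≤ |sin (n * x)| * |cos x| + |cos (n * x)| * |sin x| := by
        simpa only [abs_mul] using abs_add_le (sin (n * x) * cos x) (cos (n * x) * sin x)
      _ ≤ |sin (n * x)| * 1 + 1 * |sin x| := by
        gcongr <;> exact abs_cos_le_one _
      _ ≤ (n + 1 : ℕ) * |sin x| := by
        push_cast
        linarith

/-- The set `S(α)` of solutions of the quasimomenta equation. -/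
def quasimomenta (ℓ : ℕ) (α : ℝ) : Set ℝ :=
  {p | p ∈ Ioo 0 π ∧ sin (ℓ * p) ≠ 0 ∧ sin ((ℓ + 1) * p) = α * sin (ℓ * p)}

/-- The function whose level sets are the sets of quasimomenta; it takes the junk value `0` at the
zeros of `sin (ℓ * p)`. -/
noncomputable def sinRatio (ℓ : ℕ) (p : ℝ) : ℝ :=
  sin ((ℓ + 1) * p) / sin (ℓ * p)

/-- The open interval between the consecutive zeros `k * π / ℓ` and `(k + 1) * π / ℓ` of
`sin (ℓ * p)`, numbered from `k = 0`. -/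
def branch (ℓ k : ℕ) : Set ℝ :=
  Ioo (k * π / ℓ) ((k + 1) * π / ℓ)

section Branches

variable {ℓ k : ℕ} {p α : ℝ}

lemma mem_branch_iff (hℓ : 0 < ℓ) :
    p ∈ branch ℓ k ↔ k * π < ℓ * p ∧ ℓ * p < (k + 1) * π := by
  have hℓ' : (0 : ℝ) < ℓ := by exact_mod_cast hℓ
  rw [branch, mem_Ioo, div_lt_iff₀' hℓ', lt_div_iff₀' hℓ']

lemma branch_subset_Ioo (hk : k < ℓ) : branch ℓ k ⊆ Ioo 0 π := by
  have hℓ : (0 : ℝ) < ℓ := by exact_mod_cast k.zero_le.trans_lt hk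
  have hk' : (k : ℝ) + 1 ≤ ℓ := by exact_mod_cast hk
  refine Ioo_subset_Ioo (by positivity) ?_
  rw [div_le_iff₀' hℓ]
  gcongr

lemma eventually_mem_branch (hℓ : 0 < ℓ) : ∀ᶠ p in 𝓝[>] (k * π / ℓ), p ∈ branch ℓ k :=
  Ioo_mem_nhdsGT (by gcongr; exact lt_add_one _)

lemma neg_one_pow_mul_sin_pos_of_mem_branch (hℓ : 0 < ℓ) (hp : p ∈ branch ℓ k) :
    0 < (-1) ^ k * sin (ℓ * p) := by
  obtain ⟨hleft, hright⟩ := (mem_branch_iff hℓ).1 hp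
  rw [← sin_sub_nat_mul_pi]
  exact sin_pos_of_pos_of_lt_pi (by linarith) (by linarith)

lemma sin_ne_zero_of_mem_branch (hℓ : 0 < ℓ) (hp : p ∈ branch ℓ k) : sin (ℓ * p) ≠ 0 :=
  right_ne_zero_of_mul (neg_one_pow_mul_sin_pos_of_mem_branch hℓ hp).ne'

lemma floor_eq_of_mem_branch (hℓ : 0 < ℓ) (hp : p ∈ branch ℓ k) : ⌊ℓ * p / π⌋₊ = k := by
  obtain ⟨hleft, hright⟩ := (mem_branch_iff hℓ).1 hp
  have hk : (k : ℝ) ≤ ℓ * p / π := (le_div_iff₀ pi_pos).2 hleft.le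
  exact (Nat.floor_eq_iff (k.cast_nonneg.trans hk)).2 ⟨hk, (div_lt_iff₀ pi_pos).2 hright⟩

lemma exists_mem_branch (hp : p ∈ Ioo 0 π) (hsin : sin (ℓ * p) ≠ 0) :
    ∃ k < ℓ, p ∈ branch ℓ k := by
  have hℓ : 0 < ℓ := Nat.pos_of_ne_zero fun h => hsin (by simp [h])
  have hℓ' : (0 : ℝ) < ℓ := by exact_mod_cast hℓ
  have hnonneg : 0 ≤ ℓ * p / π := div_nonneg (mul_nonneg hℓ'.le hp.1.le) pi_pos.le
  have hle : ⌊ℓ * p / π⌋₊ * π ≤ ℓ * p := (le_div_iff₀ pi_pos).1 (Nat.floor_le hnonneg)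
  have hne : ⌊ℓ * p / π⌋₊ * π ≠ ℓ * p := fun h => hsin (h ▸ sin_nat_mul_pi _)
  refine ⟨⌊ℓ * p / π⌋₊, ?_, (mem_branch_iff hℓ).2 ⟨hle.lt_of_ne hne, ?_⟩⟩
  · rw [Nat.floor_lt hnonneg, div_lt_iff₀ pi_pos]
    exact mul_lt_mul_of_pos_left hp.2 hℓ'
  · exact (div_lt_iff₀ pi_pos).1 (Nat.lt_floor_add_one _)

lemma pi_sub_mem_branch {j : ℕ} (hjk : j + k + 1 = ℓ) (hp : p ∈ branch ℓ k) :
    π - p ∈ branch ℓ j := by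
  have hℓ : 0 < ℓ := by omega
  have hℓ' : (ℓ : ℝ) = j + k + 1 := by exact_mod_cast hjk.symm
  obtain ⟨hleft, hright⟩ := (mem_branch_iff hℓ).1 hp
  rw [mem_branch_iff hℓ, mul_sub]
  have hsum : ℓ * π = j * π + k * π + π := by rw [hℓ']; ring
  constructor <;> linarith

lemma sinRatio_pi_sub (ℓ : ℕ) (p : ℝ) : sinRatio ℓ (π - p) = -sinRatio ℓ p := by
  have hnum : sin ((ℓ + 1) * (π - p)) = (-1) ^ ℓ * sin ((ℓ + 1) * p) := by
    have h := sin_nat_mul_pi_sub ((ℓ + 1) * p) (ℓ + 1)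
    push_cast at h
    rw [mul_sub, h, pow_succ]
    ring
  have hden : sin (ℓ * (π - p)) = (-1) ^ ℓ * -sin (ℓ * p) := by
    rw [mul_sub, sin_nat_mul_pi_sub, mul_neg]
  have hsign : (-1 : ℝ) ^ ℓ ≠ 0 := pow_ne_zero _ (by norm_num)
  rw [sinRatio, hnum, hden, mul_div_mul_left _ _ hsign, div_neg, sinRatio]

lemma hasDerivAt_sinRatio (hsin : sin (ℓ * p) ≠ 0) :
    HasDerivAt (sinRatio ℓ)
      ((cos ((ℓ + 1) * p) * (ℓ + 1) * sin (ℓ * p) - sin ((ℓ + 1) * p) * (cos (ℓ * p) * ℓ)) /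
        sin (ℓ * p) ^ 2) p := by
  simpa only [mul_one, id_eq] using!
    ((hasDerivAt_id p).const_mul ((ℓ : ℝ) + 1)).sin.div ((hasDerivAt_id p).const_mul (ℓ : ℝ)).sin
      hsin

lemma deriv_sinRatio_numerator_neg (hp : 0 < sin p) (hsin : sin (ℓ * p) ≠ 0) :
    cos ((ℓ + 1) * p) * (ℓ + 1) * sin (ℓ * p) - sin ((ℓ + 1) * p) * (cos (ℓ * p) * ℓ) < 0 := by
  have hexpand : cos ((ℓ + 1) * p) * (ℓ + 1) * sin (ℓ * p) -
      sin ((ℓ + 1) * p) * (cos (ℓ * p) * ℓ) =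
        sin (ℓ * p) * (cos (ℓ * p) * cos p) - ℓ * sin p - sin (ℓ * p) ^ 2 * sin p := by
    rw [add_one_mul, cos_add, sin_add]
    linear_combination -(ℓ * sin p) * sin_sq_add_cos_sq (ℓ * p)
  have hbound : sin (ℓ * p) * (cos (ℓ * p) * cos p) ≤ ℓ * sin p :=
    calc sin (ℓ * p) * (cos (ℓ * p) * cos p)
        ≤ |sin (ℓ * p)| * (|cos (ℓ * p)| * |cos p|) := by
          simpa only [abs_mul] using le_abs_self (sin (ℓ * p) * (cos (ℓ * p) * cos p))
      _ ≤ |sin (ℓ * p)| * (1 * 1) := by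
          gcongr <;> exact abs_cos_le_one _
      _ ≤ ℓ * sin p := by
          simpa only [mul_one, abs_of_pos hp] using abs_sin_nat_mul_le ℓ p
  have hpos : 0 < sin (ℓ * p) ^ 2 * sin p := by positivity
  linarith

lemma continuousOn_sinRatio_branch (hℓ : 0 < ℓ) : ContinuousOn (sinRatio ℓ) (branch ℓ k) :=
  fun _ hp =>
    (hasDerivAt_sinRatio (sin_ne_zero_of_mem_branch hℓ hp)).continuousAt.continuousWithinAt

lemma strictAntiOn_sinRatio_branch (hk : k < ℓ) : StrictAntiOn (sinRatio ℓ) (branch ℓ k) := by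
  have hℓ : 0 < ℓ := k.zero_le.trans_lt hk
  refine strictAntiOn_of_deriv_neg (convex_Ioo _ _) (continuousOn_sinRatio_branch hℓ) fun p hp => ?_
  have hp : p ∈ branch ℓ k := interior_subset hp
  have hsin := sin_ne_zero_of_mem_branch hℓ hp
  rw [(hasDerivAt_sinRatio hsin).deriv]
  exact div_neg_of_neg_of_pos
    (deriv_sinRatio_numerator_neg (sin_pos_of_mem_Ioo (branch_subset_Ioo hk hp)) hsin)
    (by positivity)

lemma tendsto_sinRatio_nhdsGT_zero (hℓ : 0 < ℓ) :
    Tendsto (sinRatio ℓ) (𝓝[>] 0) (𝓝 ((ℓ + 1) / ℓ)) := by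
  have hℓ' : (0 : ℝ) < ℓ := by exact_mod_cast hℓ
  have hsinc (c : ℝ) : Tendsto (fun p => c * sinc (c * p)) (𝓝[>] 0) (𝓝 c) := by
    have hcont : Continuous fun p => c * sinc (c * p) :=
      continuous_const.mul (continuous_sinc.comp (continuous_const_mul c))
    simpa using (hcont.tendsto 0).mono_left nhdsWithin_le_nhds
  refine ((hsinc (ℓ + 1)).div (hsinc ℓ) hℓ'.ne').congr' ?_
  filter_upwards [self_mem_nhdsWithin] with p hp
  have hp : 0 < p := hp
  rw [Pi.div_apply, sinc_of_ne_zero (by positivity), sinc_of_ne_zero (by positivity), sinRatio]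
  field_simp

lemma tendsto_sinRatio_nhdsGT_atTop (hk₀ : 0 < k) (hk : k < ℓ) :
    Tendsto (sinRatio ℓ) (𝓝[>] (k * π / ℓ)) atTop := by
  have hℓ : 0 < ℓ := hk₀.trans hk
  have hℓ' : (0 : ℝ) < ℓ := by exact_mod_cast hℓ
  have hcut : k * π / ℓ ∈ Ioo 0 π := by
    refine ⟨by positivity, ?_⟩
    rw [div_lt_iff₀' hℓ']
    gcongr
  have hmul : ℓ * (k * π / ℓ) = k * π := mul_div_cancel₀ _ hℓ'.ne'
  have hnum : Tendsto (fun p => (-1) ^ k * sin ((ℓ + 1) * p)) (𝓝[>] (k * π / ℓ))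
      (𝓝 (sin (k * π / ℓ))) := by
    have hcont : Continuous fun p : ℝ => (-1) ^ k * sin ((ℓ + 1) * p) := by fun_prop
    convert! (hcont.tendsto (k * π / ℓ)).mono_left nhdsWithin_le_nhds using 2
    rw [← sin_sub_nat_mul_pi, add_one_mul, hmul, add_sub_cancel_left]
  have hden : Tendsto (fun p => (-1) ^ k * sin (ℓ * p)) (𝓝[>] (k * π / ℓ)) (𝓝[>] 0) := by
    refine tendsto_nhdsWithin_iff.2 ⟨?_, ?_⟩
    · have hcont : Continuous fun p : ℝ => (-1) ^ k * sin (ℓ * p) := by fun_prop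
      convert! (hcont.tendsto (k * π / ℓ)).mono_left nhdsWithin_le_nhds using 2
      rw [hmul, sin_nat_mul_pi, mul_zero]
    · filter_upwards [eventually_mem_branch hℓ] with p hp
      exact neg_one_pow_mul_sin_pos_of_mem_branch hℓ hp
  have hquot := hnum.pos_mul_atTop (sin_pos_of_mem_Ioo hcut) hden.inv_tendsto_nhdsGT_zero
  refine hquot.congr fun p => ?_
  rw [Pi.inv_apply, ← div_eq_mul_inv, mul_div_mul_left _ _ (pow_ne_zero _ (by norm_num)), sinRatio]

lemma exists_mem_branch_lt_sinRatio_iff (hk : k < ℓ) :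
    (∃ p ∈ branch ℓ k, α < sinRatio ℓ p) ↔ (k = 0 → α < (ℓ + 1) / ℓ) := by
  have hℓ : 0 < ℓ := k.zero_le.trans_lt hk
  rcases k.eq_zero_or_pos with rfl | hk₀
  · have hlim : Tendsto (sinRatio ℓ) (𝓝[>] ((0 : ℕ) * π / ℓ)) (𝓝 ((ℓ + 1) / ℓ)) := by
      simpa using tendsto_sinRatio_nhdsGT_zero hℓ
    constructor
    · rintro ⟨p, hp, hαp⟩ -
      exact hαp.trans
        (lt_of_tendsto_nhdsGT_of_strictAntiOn (strictAntiOn_sinRatio_branch hk) hlim hp)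
    · intro hα
      exact ((eventually_mem_branch hℓ).and (hlim.eventually_const_lt (hα rfl))).exists
  · refine iff_of_true ?_ fun h => absurd h hk₀.ne'
    exact ((eventually_mem_branch hℓ).and
      ((tendsto_sinRatio_nhdsGT_atTop hk₀ hk).eventually_gt_atTop α)).exists

lemma exists_mem_branch_sinRatio_lt_iff (hk : k < ℓ) :
    (∃ p ∈ branch ℓ k, sinRatio ℓ p < α) ↔ (k + 1 = ℓ → -((ℓ + 1) / ℓ) < α) := by
  obtain ⟨j, hj⟩ : ∃ j, j + k + 1 = ℓ := ⟨ℓ - 1 - k, by omega⟩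
  have hreflect : (∃ p ∈ branch ℓ k, sinRatio ℓ p < α) ↔ ∃ q ∈ branch ℓ j, -α < sinRatio ℓ q := by
    constructor
    · rintro ⟨p, hp, hpα⟩
      exact ⟨π - p, pi_sub_mem_branch hj hp, by rw [sinRatio_pi_sub]; linarith⟩
    · rintro ⟨q, hq, hαq⟩
      exact ⟨π - q, pi_sub_mem_branch (by omega) hq, by rw [sinRatio_pi_sub]; linarith⟩
  rw [hreflect, exists_mem_branch_lt_sinRatio_iff (by omega), neg_lt]
  have hends : j = 0 ↔ k + 1 = ℓ := by omega
  rw [hends]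

lemma mem_image_sinRatio_branch_iff (hk : k < ℓ) :
    α ∈ sinRatio ℓ '' branch ℓ k ↔
      (k = 0 → α < (ℓ + 1) / ℓ) ∧ (k + 1 = ℓ → -((ℓ + 1) / ℓ) < α) := by
  rw [← exists_mem_branch_lt_sinRatio_iff hk, ← exists_mem_branch_sinRatio_lt_iff hk]
  exact mem_image_Ioo_iff_of_strictAntiOn (strictAntiOn_sinRatio_branch hk)
    (continuousOn_sinRatio_branch (k.zero_le.trans_lt hk))

lemma mem_quasimomenta_iff :
    p ∈ quasimomenta ℓ α ↔ ∃ k < ℓ, p ∈ branch ℓ k ∧ sinRatio ℓ p = α := by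
  constructor
  · rintro ⟨hp, hsin, heq⟩
    obtain ⟨k, hk, hpk⟩ := exists_mem_branch hp hsin
    exact ⟨k, hk, hpk, (div_eq_iff hsin).2 heq⟩
  · rintro ⟨k, hk, hpk, heq⟩
    have hsin := sin_ne_zero_of_mem_branch (k.zero_le.trans_lt hk) hpk
    exact ⟨branch_subset_Ioo hk hpk, hsin, (div_eq_iff hsin).1 heq⟩

lemma bijOn_floor_quasimomenta (hℓ : 0 < ℓ) :
    BijOn (fun p => ⌊ℓ * p / π⌋₊) (quasimomenta ℓ α)
      {k | k < ℓ ∧ α ∈ sinRatio ℓ '' branch ℓ k} := by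
  refine ⟨fun p hp => ?_, fun p hp q hq hpq => ?_, ?_⟩
  · obtain ⟨k, hk, hpk, heq⟩ := mem_quasimomenta_iff.1 hp
    simp only [floor_eq_of_mem_branch hℓ hpk]
    exact ⟨hk, p, hpk, heq⟩
  · obtain ⟨k, hk, hpk, hpα⟩ := mem_quasimomenta_iff.1 hp
    obtain ⟨j, -, hqj, hqα⟩ := mem_quasimomenta_iff.1 hq
    simp only [floor_eq_of_mem_branch hℓ hpk, floor_eq_of_mem_branch hℓ hqj] at hpq
    subst hpq
    exact (strictAntiOn_sinRatio_branch hk).injOn hpk hqj (hpα.trans hqα.symm)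
  · rintro k ⟨hk, p, hpk, heq⟩
    exact ⟨p, mem_quasimomenta_iff.2 ⟨k, hk, hpk, heq⟩, floor_eq_of_mem_branch hℓ hpk⟩

lemma ncard_quasimomenta (hℓ : 0 < ℓ) :
    (quasimomenta ℓ α).ncard =
      {k | k < ℓ ∧ (k = 0 → α < (ℓ + 1) / ℓ) ∧ (k + 1 = ℓ → -((ℓ + 1) / ℓ) < α)}.ncard := by
  rw [(bijOn_floor_quasimomenta hℓ).ncard_eq]
  congr 1
  ext k
  exact and_congr_right mem_image_sinRatio_branch_iff

lemma ncard_quasimomenta_of_abs_lt (hℓ : 0 < ℓ) (hα : |α| < (ℓ + 1) / ℓ) :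
    (quasimomenta ℓ α).ncard = ℓ := by
  obtain ⟨hlower, hupper⟩ := abs_lt.1 hα
  simp only [ncard_quasimomenta hℓ, hlower, hupper, implies_true, and_true]
  exact ncard_Iio_nat ℓ

lemma ncard_quasimomenta_of_le (hℓ : 0 < ℓ) (hα : (ℓ + 1) / ℓ ≤ α) :
    (quasimomenta ℓ α).ncard = ℓ - 1 := by
  have hlower : -((ℓ + 1) / ℓ) < α :=
    (neg_lt_zero.2 (by positivity)).trans (hα.trans_lt' (by positivity))
  rw [ncard_quasimomenta hℓ, ← ncard_Ico_nat]
  congr 1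
  ext k
  simp only [mem_ofPred_eq, hα.not_gt, hlower, mem_Ico, imp_false, implies_true, and_true]
  omega

lemma ncard_quasimomenta_of_le_neg (hℓ : 0 < ℓ) (hα : (ℓ + 1) / ℓ ≤ -α) :
    (quasimomenta ℓ α).ncard = ℓ - 1 := by
  have hlower : α ≤ -((ℓ + 1) / ℓ) := le_neg.1 hα
  have hupper : α < (ℓ + 1) / ℓ :=
    (hlower.trans_lt (neg_lt_zero.2 (by positivity))).trans (by positivity)
  rw [ncard_quasimomenta hℓ, ← ncard_Iio_nat (ℓ - 1)]
  congr 1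
  ext k
  simp only [mem_ofPred_eq, hupper, hlower.not_gt, mem_Iio, imp_false, implies_true, true_and]
  omega

end Branches

theorem quasimomenta_count_solutions_general (ℓ : ℕ) (hℓ : 1 ≤ ℓ) (α : ℝ) :
    (|α| < (ℓ + 1) / ℓ → (quasimomenta ℓ α).ncard = ℓ) ∧
      ((ℓ + 1) / ℓ ≤ |α| → (quasimomenta ℓ α).ncard = ℓ - 1) :=
  ⟨ncard_quasimomenta_of_abs_lt hℓ, fun hα =>
    (le_abs.1 hα).elim (ncard_quasimomenta_of_le hℓ) (ncard_quasimomenta_of_le_neg hℓ)⟩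

theorem quasimomenta_count_solutions (ℓ : ℕ) (hℓ : 1 ≤ ℓ) (α : ℝ) :
    (0 ≤ α → α < ((ℓ : ℝ) + 1) / ℓ →
      {p : ℝ | p ∈ Set.Ioo 0 Real.pi ∧ Real.sin (ℓ * p) ≠ 0 ∧
        Real.sin ((ℓ + 1) * p) = α * Real.sin (ℓ * p)}.ncard = ℓ) ∧
    (((ℓ : ℝ) + 1) / ℓ ≤ α →
      {p : ℝ | p ∈ Set.Ioo 0 Real.pi ∧ Real.sin (ℓ * p) ≠ 0 ∧
        Real.sin ((ℓ + 1) * p) = α * Real.sin (ℓ * p)}.ncard = ℓ - 1) := by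
  obtain ⟨hsmall, hlarge⟩ := quasimomenta_count_solutions_general ℓ hℓ α
  exact ⟨fun h₀ h => hsmall (by rwa [abs_of_nonneg h₀]), fun h => hlarge (h.trans (le_abs_self α))⟩
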